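/- Given reals a, c, δ, γ > 0 satisfying (i) c < min(a, δ), (ii) γ ≥ 4a and γ > δ, (iii) δ + (c/δ)·γ ≤ a, suppose f satisfies (H) and (H''). Then the equation x'(t) = f(x(t-1)) has an SOP solution whose minimal period is strictly greater than 4 + 2c/δ + 6a/γ + 2(γ - 4a)/δ. -/

import Mathlib

/-!
Start the equation from the affine segment `x t = a - γ (t + 1)` on `[-1, 0]`. On `[0, 3a/γ]` a
change of variables gives `x t = a - γ + γ⁻¹ ∫_{a - γt}^a f`; since `f` is odd, `∫_y^a f` only
depends on `|y|` and is at most `γa` in absolute value, so `x` stays in `[-γ, -2a]`, where `f = δ`.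
Moreover `x (3a/γ) < 2a - γ`, strictly because `|f (2a)| = δ < γ`. From there `x` climbs with slope
`δ` until one unit of time after it reaches `-2a`, at a time `t₁ > 3a/γ + (γ - 4a)/δ`.

The delayed argument then crosses `[-2a, -2a + c]` during a time `c/δ`, in which `x` rises by at
most `γc/δ`, so that `x ≤ -a` still holds. Hence one unit of time later the delayed argument
has remained in `[-2a + c, -a]`, where `f = γ`, and `x` climbs with slope `γ` until one unit after
it reaches `-a`, at a time `t₂ ≥ t₁ + c/δ + 1`. On `[t₂, t₂ + 1]` the solution is therefore the
initial segment reflected at `0`. By uniqueness and oddness `x (t + τ) = -x t` with `τ = t₂ + 1`, so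
`x` extends to a periodic solution on `ℝ` whose zeros are `a/γ - 1 + kτ`, `k ∈ ℤ`, and whose minimal
period is `2τ`.
-/

open Set Filter

/-- Hypotheses (H): `f` is continuous, satisfies the negative feedback condition,
and is differentiable on a neighborhood of `0` with `f'(0) < 0`. -/
def HypH (f : ℝ → ℝ) : Prop :=
  Continuous f ∧ (∀ x : ℝ, x ≠ 0 → x * f x < 0) ∧
    (∀ᶠ y in nhds (0 : ℝ), DifferentiableAt ℝ f y) ∧ deriv f 0 < 0

/-- A solution on `[-1,∞)` of the delay equation `x'(t) = f (x (t-1))`. -/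
def IsSolOn (f x : ℝ → ℝ) : Prop :=
  ContinuousOn x (Ici (-1)) ∧ ∀ t : ℝ, 0 < t → HasDerivAt x (f (x (t - 1))) t

/-- Membership in the set `K`: `φ(-1) = 0`, `φ` nondecreasing on `[-1,0]`,
continuous there, and `|φ| ≤ M`. -/
def MemK (M : ℝ) (φ : ℝ → ℝ) : Prop :=
  ContinuousOn φ (Icc (-1) 0) ∧ φ (-1) = 0 ∧ MonotoneOn φ (Icc (-1) 0) ∧
    ∀ s ∈ Icc (-1 : ℝ) 0, |φ s| ≤ M

/-- `T` is the minimal (positive) period of `p`. -/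
def MinPeriod {α : Type*} (p : ℝ → α) (T : ℝ) : Prop :=
  0 < T ∧ (∀ t, p (t + T) = p t) ∧
    ∀ T' : ℝ, 0 < T' → (∀ t, p (t + T') = p t) → T ≤ T'

/-- A slowly oscillating periodic (SOP) solution of `x'(t) = f (x (t-1))`:
a nonconstant periodic differentiable solution any two of whose distinct
zeros are separated by more than `1`. -/
def IsSOP (f p : ℝ → ℝ) : Prop :=
  (∀ t : ℝ, HasDerivAt p (f (p (t - 1))) t) ∧
    (∃ T : ℝ, 0 < T ∧ ∀ t, p (t + T) = p t) ∧
    (∃ t s : ℝ, p t ≠ p s) ∧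
    ∀ z z' : ℝ, p z = 0 → p z' = 0 → z ≠ z' → 1 < |z - z'|

/-- A Kaplan–Yorke solution: an SOP solution of minimal period `4`
satisfying `x(t) = -x(t-2)`. -/
def IsKY (f x : ℝ → ℝ) : Prop :=
  IsSOP f x ∧ MinPeriod x 4 ∧ ∀ t : ℝ, x t = -x (t - 2)

/-- Hypotheses (H') with constants `μ, β, σ`. -/
def HypH' (f : ℝ → ℝ) (μ β σ : ℝ) : Prop :=
  (∀ x : ℝ, |f x| ≤ μ) ∧ ∀ x : ℝ, β ≤ |x| → σ ≤ |f x|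

/-- Hypotheses (H'') with constants `a, c, δ, γ`. -/
def HypH'' (f : ℝ → ℝ) (a c δ γ : ℝ) : Prop :=
  (∀ x : ℝ, f (-x) = -f x) ∧ (∀ x ∈ Icc (0 : ℝ) (2 * a), |f x| ≤ γ) ∧
    (∀ x ∈ Icc a (2 * a - c), f x = -γ) ∧ ∀ x ∈ Icc (2 * a) γ, f x = -δ

/-- The minimal period of `p` equals `z'' - z` for three consecutive zeros
`z < z' < z''` of `p`. -/
def PeriodThreeZeros (p : ℝ → ℝ) : Prop :=
  ∃ z z' z'' : ℝ, z < z' ∧ z' < z'' ∧ p z = 0 ∧ p z' = 0 ∧ p z'' = 0 ∧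
    (∀ t, t ∈ Ioo z z' ∪ Ioo z' z'' → p t ≠ 0) ∧ MinPeriod p (z'' - z)

section DelayStep

variable {E : Type*} [NormedAddCommGroup E] [NormedSpace ℝ E] {f : E → E} {φ y z : ℝ → E}

/-- One step of the method of steps: the integral operator whose fixed points are the solutions of
`x' (t) = f (x (t - 1))`, `t > 0`, with history `φ` on `(-∞, 0]`. The truncations `min t 0` and
`max t 0` put history and evolution into a single formula. -/
noncomputable def delayStep (f : E → E) (φ y : ℝ → E) (t : ℝ) : E :=
  φ (min t 0) + ∫ s in (0 : ℝ)..max t 0, f (y (s - 1))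

lemma delayStep_eqOn_Iic_zero : EqOn (delayStep f φ y) φ (Iic 0) := fun t ht => by
  simp [delayStep, min_eq_left (mem_Iic.1 ht), max_eq_right (mem_Iic.1 ht)]

lemma delayStep_eqOn_Iic_add_one {T : ℝ} (hT : -1 ≤ T) (h : EqOn y z (Iic T)) :
    EqOn (delayStep f φ y) (delayStep f φ z) (Iic (T + 1)) := by
  intro t ht
  refine congrArg (φ (min t 0) + ·) (intervalIntegral.integral_congr fun s hs => ?_)
  rw [uIcc_of_le (le_max_right _ _)] at hs
  have hsT : s ≤ T + 1 := hs.2.trans (max_le ht (by linarith))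
  exact congrArg f (h (mem_Iic.2 (by linarith)))

lemma continuous_delayStep (hf : Continuous f) (hφ : Continuous φ) (hy : Continuous y) :
    Continuous (delayStep f φ y) := by
  have hg : Continuous fun s => f (y (s - 1)) := by fun_prop
  have hprim := intervalIntegral.continuous_primitive (μ := MeasureTheory.volume)
    (fun _ _ => hg.intervalIntegrable _ _) 0
  exact (by fun_prop : Continuous fun t => φ (min t 0)).add
    (hprim.comp (by fun_prop : Continuous fun t : ℝ => max t 0))

lemma hasDerivAt_delayStep [CompleteSpace E] (hf : Continuous f) (hy : Continuous y) {t : ℝ}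
    (ht : 0 < t) : HasDerivAt (delayStep f φ y) (f (y (t - 1))) t := by
  have hg : Continuous fun s => f (y (s - 1)) := by fun_prop
  refine ((hg.integral_hasStrictDerivAt 0 t).hasDerivAt.const_add (φ 0)).congr_of_eventuallyEq ?_
  filter_upwards [Ioi_mem_nhds ht] with s hs
  rw [delayStep, min_eq_right (mem_Ioi.1 hs).le, max_eq_left (mem_Ioi.1 hs).le]

lemma iterate_delayStep_eqOn {m n : ℕ} (hnm : n ≤ m) :
    EqOn ((delayStep f φ)^[m] φ) ((delayStep f φ)^[n] φ) (Iic n) := by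
  induction n generalizing m with
  | zero =>
    cases m with
    | zero => exact fun _ _ => rfl
    | succ m =>
      rw [Function.iterate_succ_apply', Nat.cast_zero]
      exact delayStep_eqOn_Iic_zero
  | succ n ih =>
    obtain ⟨m, rfl⟩ := Nat.exists_eq_add_of_le' hnm
    rw [← add_assoc, Function.iterate_succ_apply', Function.iterate_succ_apply', Nat.cast_succ]
    exact delayStep_eqOn_Iic_add_one (by linarith [n.cast_nonneg (α := ℝ)]) (ih (by lia))

lemma exists_continuous_isFixedPt_delayStep (hf : Continuous f) (hφ : Continuous φ) :
    ∃ x, Continuous x ∧ Function.IsFixedPt (delayStep f φ) x := by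
  let iter (n : ℕ) : ℝ → E := (delayStep f φ)^[n] φ
  let x (t : ℝ) : E := iter ⌈t⌉₊ t
  have hiter_succ (n : ℕ) : iter (n + 1) = delayStep f φ (iter n) :=
    Function.iterate_succ_apply' ..
  have hx (n : ℕ) : EqOn x (iter n) (Iic n) := fun t ht =>
    (iterate_delayStep_eqOn (Nat.ceil_le.2 ht) (Nat.le_ceil t)).symm
  have hiter (n : ℕ) : Continuous (iter n) := by
    induction n with
    | zero => exact hφ
    | succ n ih => exact hiter_succ n ▸ continuous_delayStep hf hφ ih
  refine ⟨x, continuous_iff_continuousAt.2 fun t => ?_, funext fun t => ?_⟩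
  · obtain ⟨n, hn⟩ := exists_nat_gt t
    exact (hiter n).continuousAt.congr ((hx n).symm.eventuallyEq_of_mem (Iic_mem_nhds hn))
  · have ht : t ≤ ⌈t⌉₊ + 1 := (Nat.le_ceil t).trans (lt_add_one _).le
    rw [hx (⌈t⌉₊ + 1) (by exact_mod_cast ht), hiter_succ]
    exact delayStep_eqOn_Iic_add_one (by linarith [⌈t⌉₊.cast_nonneg (α := ℝ)]) (hx _) ht

end DelayStep

lemma sub_mem_Icc_of_hasDerivAt {x g : ℝ → ℝ} {s t m M : ℝ} (hst : s ≤ t)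
    (hc : ContinuousOn x (Icc s t)) (hd : ∀ u ∈ Ioo s t, HasDerivAt x (g u) u)
    (hg : ∀ u ∈ Ioo s t, g u ∈ Icc m M) : x t - x s ∈ Icc (m * (t - s)) (M * (t - s)) := by
  rcases hst.eq_or_lt with rfl | hlt
  · simp
  obtain ⟨u, hu, hslope⟩ := exists_hasDerivAt_eq_slope x g hlt hc hd
  rw [eq_div_iff (sub_pos.2 hlt).ne'] at hslope
  rw [← hslope]
  have hlen : 0 ≤ t - s := sub_nonneg.2 hst
  exact ⟨mul_le_mul_of_nonneg_right (hg u hu).1 hlen, mul_le_mul_of_nonneg_right (hg u hu).2 hlen⟩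

namespace IsSolOn

variable {f x y : ℝ → ℝ} {s t m M : ℝ}

lemma exists_eqOn_Iic {φ : ℝ → ℝ} (hf : Continuous f) (hφ : Continuous φ) :
    ∃ x, IsSolOn f x ∧ EqOn x φ (Iic 0) := by
  obtain ⟨x, hx, hfix⟩ := exists_continuous_isFixedPt_delayStep hf hφ
  refine ⟨x, ⟨hx.continuousOn, fun t ht => ?_⟩, hfix ▸ delayStep_eqOn_Iic_zero⟩
  have hderiv := hasDerivAt_delayStep (φ := φ) hf hx ht
  rwa [hfix] at hderiv

lemma neg (hodd : ∀ y, f (-y) = -f y) (hx : IsSolOn f x) : IsSolOn f fun t => -x t :=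
  ⟨hx.1.neg, fun t ht => by simpa only [hodd] using (hx.2 t ht).fun_neg⟩

lemma comp_add_const {τ : ℝ} (hτ : 0 ≤ τ) (hx : IsSolOn f x) : IsSolOn f fun t => x (t + τ) := by
  refine ⟨hx.1.comp (by fun_prop) fun t ht => ?_, fun t ht => ?_⟩
  · exact mem_Ici.2 (by linarith [mem_Ici.1 ht])
  · simpa only [sub_add_eq_add_sub] using (hx.2 (t + τ) (by linarith)).comp_add_const t τ

lemma continuousOn_Icc (hx : IsSolOn f x) (hs : 0 ≤ s) : ContinuousOn x (Icc s t) :=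
  hx.1.mono fun u hu => mem_Ici.2 (by linarith [hu.1])

lemma sub_mem_Icc (hx : IsSolOn f x) (hs : 0 ≤ s) (hst : s ≤ t)
    (hslope : ∀ u ∈ Ioo (s - 1) (t - 1), f (x u) ∈ Icc m M) :
    x t - x s ∈ Icc (m * (t - s)) (M * (t - s)) :=
  sub_mem_Icc_of_hasDerivAt hst (hx.continuousOn_Icc hs)
    (fun u hu => hx.2 u (hs.trans_lt hu.1))
    fun u hu => hslope (u - 1) ⟨by linarith [hu.1], by linarith [hu.2]⟩

lemma eq_add_mul (hx : IsSolOn f x) (hs : 0 ≤ s) (hst : s ≤ t)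
    (hslope : ∀ u ∈ Ioo (s - 1) (t - 1), f (x u) = m) : x t = x s + m * (t - s) := by
  have h := hx.sub_mem_Icc hs hst fun u hu => ⟨(hslope u hu).ge, (hslope u hu).le⟩
  rw [Icc_self, mem_singleton_iff] at h
  linarith

lemma eqOn_Ici (hx : IsSolOn f x) (hy : IsSolOn f y) (h : EqOn x y (Icc (-1) 0)) :
    EqOn x y (Ici (-1)) := by
  have hstep (n : ℕ) : EqOn x y (Icc (-1) n) := by
    induction n with
    | zero => simpa using h
    | succ n ih =>
      rintro t ⟨ht, htn⟩
      rcases le_total t 0 with h0 | h0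
      · exact h ⟨ht, h0⟩
      push_cast at htn
      have hsub := sub_mem_Icc_of_hasDerivAt (m := 0) (M := 0) h0
        ((hx.continuousOn_Icc le_rfl).sub (hy.continuousOn_Icc le_rfl))
        (fun u hu => (hx.2 u hu.1).sub (hy.2 u hu.1)) fun u hu => by
          simp [ih (show u - 1 ∈ Icc (-1 : ℝ) n from ⟨by linarith [hu.1], by linarith [hu.2]⟩)]
      simp only [zero_mul, Icc_self, mem_singleton_iff, Pi.sub_apply,
        h (show (0 : ℝ) ∈ Icc (-1) 0 by simp), sub_self, sub_zero] at hsub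
      exact sub_eq_zero.1 hsub
  intro t ht
  obtain ⟨n, hn⟩ := exists_nat_ge t
  exact hstep n ⟨ht, hn⟩

lemma antiperiodic_of_segment {τ : ℝ} (hodd : ∀ y, f (-y) = -f y) (hx : IsSolOn f x) (hτ : 0 ≤ τ)
    (hseg : ∀ t ∈ Icc (-1) 0, x (t + τ) = -x t) : ∀ t ∈ Ici (-1), x (t + τ) = -x t :=
  (hx.comp_add_const hτ).eqOn_Ici (hx.neg hodd) hseg

/-- As long as the delayed argument stays in an interval on which `f = m > 0`, the solution climbs
with slope `m`; this lasts until one unit of time after the solution itself leaves the interval. -/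
lemma eq_add_mul_of_forall_mem_Icc {l h τ : ℝ} (hx : IsSolOn f x) (hs : 0 ≤ s) (hm : 0 < m)
    (hf : ∀ y ∈ Icc l h, f y = m) (hmem : ∀ t ∈ Icc (s - 1) s, x t ∈ Icc l h)
    (hτ : m * (τ - s) = h - x s) : ∀ t ∈ Icc s (τ + 1), x t = h + m * (t - τ) := by
  have hstep (n : ℕ) : ∀ t ∈ Icc s (τ + 1), t ≤ s + n → x t = h + m * (t - τ) := by
    induction n with
    | zero =>
      rintro t ⟨hst, -⟩ htn
      obtain rfl : t = s := le_antisymm (by simpa using htn) hst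
      linarith
    | succ n ih =>
      rintro t ⟨hst, htτ⟩ htn
      push_cast at htn
      have hslope : ∀ u ∈ Ioo (s - 1) (t - 1), f (x u) = m := by
        rintro u ⟨hsu, hut⟩
        refine hf _ ?_
        rcases le_total u s with hus | hus
        · exact hmem u ⟨hsu.le, hus⟩
        · have hl : l ≤ x s := (hmem s ⟨by linarith, le_rfl⟩).1
          have hxu := ih u ⟨hus, by linarith⟩ (by linarith)
          constructor <;> nlinarith
      linarith [hx.eq_add_mul hs hst hslope]
  intro t ht
  obtain ⟨n, hn⟩ := exists_nat_ge (t - s)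
  exact hstep n t ht (by linarith)

lemma sub_eq_integral (hf : Continuous f) (hx : IsSolOn f x) (hs : 0 ≤ s) (hst : s ≤ t) :
    x t - x s = ∫ u in s..t, f (x (u - 1)) := by
  refine (intervalIntegral.integral_eq_sub_of_hasDerivAt_of_le hst (hx.continuousOn_Icc hs)
    (fun u hu => hx.2 u (hs.trans_lt hu.1)) (ContinuousOn.intervalIntegrable ?_)).symm
  rw [uIcc_of_le hst]
  refine hf.comp_continuousOn (hx.1.comp (by fun_prop) fun u hu => ?_)
  exact mem_Ici.2 (by linarith [hu.1])

lemma eq_add_integral_of_affine_segment {a γ : ℝ} (hf : Continuous f) (hx : IsSolOn f x)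
    (hγ : γ ≠ 0) (hseg : ∀ t ∈ Icc (-1) 0, x t = a - γ * (t + 1)) (ht : t ∈ Icc 0 1) :
    x t = a - γ + γ⁻¹ * ∫ y in (a - γ * t)..a, f y := by
  have h0 : x 0 = a - γ := by simpa using hseg 0 (by simp)
  have hdelayed : ∫ u in (0 : ℝ)..t, f (x (u - 1)) = ∫ u in (0 : ℝ)..t, f (a - γ * u) := by
    refine intervalIntegral.integral_congr fun u hu => ?_
    rw [uIcc_of_le ht.1] at hu
    simp only [hseg (u - 1) ⟨by linarith [hu.1], by linarith [hu.2, ht.2]⟩, sub_add_cancel]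
  have hsub := hx.sub_eq_integral hf le_rfl ht.1
  rw [hdelayed, intervalIntegral.integral_comp_sub_mul f hγ, mul_zero, sub_zero, smul_eq_mul,
    h0] at hsub
  linarith

end IsSolOn

section Antiperiodic

lemma exists_antiperiodic_eqOn_Ici {α β : Type*} [AddCommGroup α] [LinearOrder α]
    [IsOrderedAddMonoid α] [Archimedean α] [AddCommGroup β] {x : α → β} {t₀ τ : α} (hτ : 0 < τ)
    (hx : ∀ t ∈ Ici t₀, x (t + τ) = -x t) :
    ∃ p : α → β, Function.Antiperiodic p τ ∧ EqOn p x (Ici t₀) := by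
  let p (t : α) : β := ((toIcoDiv hτ t₀ t).negOnePow : ℤ) • x (toIcoMod hτ t₀ t)
  have hp : Function.Antiperiodic p τ := fun t => by
    simp only [p, toIcoDiv_add_right, toIcoMod_add_right, Int.negOnePow_succ, Units.val_neg,
      neg_smul]
  have hIco : EqOn p x (Ico t₀ (t₀ + τ)) := fun t ht => by
    have hdiv : toIcoDiv hτ t₀ t = 0 :=
      toIcoDiv_eq_of_sub_zsmul_mem_Ico hτ (by rwa [zero_smul, sub_zero])
    simp [p, hdiv, (toIcoMod_eq_self hτ).2 ht]
  have hstep (n : ℕ) : ∀ t ∈ Ici t₀, t < t₀ + (n + 1) • τ → p t = x t := by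
    induction n with
    | zero => exact fun t ht htn => hIco ⟨ht, by simpa using htn⟩
    | succ n ih =>
      intro t ht htn
      rcases lt_or_ge t (t₀ + τ) with hlt | hge
      · exact hIco ⟨ht, hlt⟩
      have ht' : t - τ ∈ Ici t₀ := le_sub_iff_add_le.2 hge
      rw [← sub_add_cancel t τ, hp, hx _ ht', ih _ ht']
      rwa [sub_lt_iff_lt_add, add_assoc, ← succ_nsmul]
  refine ⟨p, hp, fun t ht => ?_⟩
  obtain ⟨n, hn⟩ := Archimedean.arch (t - t₀) hτ
  refine hstep n t ht ?_
  rw [succ_nsmul, ← sub_lt_iff_lt_add']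
  exact hn.trans_lt (lt_add_of_pos_right _ hτ)

lemma hasDerivAt_of_periodic {p g : ℝ → ℝ} {t₀ T : ℝ} (hT : 0 < T) (hp : Function.Periodic p T)
    (hg : Function.Periodic g T) (hd : ∀ t, t₀ < t → HasDerivAt p (g t) t) (t : ℝ) :
    HasDerivAt p (g t) t := by
  obtain ⟨n, hn⟩ := exists_nat_gt ((t₀ - t) / T)
  have hlt : t₀ < t + n * T := by linarith [(div_lt_iff₀ hT).1 hn]
  have hshift := (hd _ hlt).comp_add_const t (n * T)
  rwa [funext (hp.nat_mul n), hg.nat_mul n] at hshift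

variable {p : ℝ → ℝ} {z₀ τ : ℝ}

lemma antiperiodic_eq_zero_iff {t₀ : ℝ} (hp : Function.Antiperiodic p τ) (hτ : 0 < τ)
    (hz : Ico t₀ (t₀ + τ) ∩ p ⁻¹' {0} = {z₀}) (t : ℝ) : p t = 0 ↔ ∃ k : ℤ, t = z₀ + k * τ := by
  have hshift (k : ℤ) (s : ℝ) : p (s + k * τ) = 0 ↔ p s = 0 := by
    rw [hp.add_int_mul_eq, mul_eq_zero_iff_left (by simp)]
  have hz₀ : p z₀ = 0 := (hz.ge (mem_singleton z₀)).2
  refine ⟨fun ht => ⟨toIcoDiv hτ t₀ t, ?_⟩, fun ⟨k, hk⟩ => by rw [hk, hshift, hz₀]⟩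
  have hmod : toIcoMod hτ t₀ t + toIcoDiv hτ t₀ t * τ = t := by
    simp [← zsmul_eq_mul]
  have hroot : toIcoMod hτ t₀ t = z₀ :=
    hz.le ⟨toIcoMod_mem_Ico hτ t₀ t, by rwa [mem_preimage, mem_singleton_iff, ← hshift, hmod]⟩
  rw [← hroot, hmod]

lemma le_abs_sub_of_eq_zero_iff (hτ : 0 < τ) (hz : ∀ t, p t = 0 ↔ ∃ k : ℤ, t = z₀ + k * τ)
    {z z' : ℝ} (h : p z = 0) (h' : p z' = 0) (hne : z ≠ z') : τ ≤ |z - z'| := by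
  obtain ⟨k, rfl⟩ := (hz z).1 h
  obtain ⟨l, rfl⟩ := (hz z').1 h'
  have hkl : k - l ≠ 0 := fun h => hne (by rw [sub_eq_zero.1 h])
  have hone : (1 : ℝ) ≤ |(k - l : ℝ)| := by exact_mod_cast Int.one_le_abs hkl
  rw [add_sub_add_left_eq_sub, ← sub_mul, abs_mul, abs_of_pos hτ]
  exact le_mul_of_one_le_left hτ.le hone

lemma ne_zero_of_eq_zero_iff (hτ : 0 < τ) (hz : ∀ t, p t = 0 ↔ ∃ k : ℤ, t = z₀ + k * τ) :
    p (z₀ + τ / 2) ≠ 0 := by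
  rw [Ne, hz]
  rintro ⟨k, hk⟩
  have hhalf : (2 * k : ℝ) = 1 := mul_right_cancel₀ hτ.ne' (by linarith)
  have : 2 * k = 1 := by exact_mod_cast hhalf
  lia

lemma minPeriod_two_mul_of_antiperiodic (hp : Function.Antiperiodic p τ) (hτ : 0 < τ)
    (hz : ∀ t, p t = 0 ↔ ∃ k : ℤ, t = z₀ + k * τ) : MinPeriod p (2 * τ) := by
  refine ⟨by linarith, hp.periodic_two_mul, fun T hT hpT => ?_⟩
  obtain ⟨k, hk⟩ := (hz (z₀ + T)).1 (by rw [hpT, hz]; exact ⟨0, by simp⟩)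
  obtain rfl : T = k * τ := by linarith
  have hpos : 0 < k := by exact_mod_cast pos_of_mul_pos_left hT hτ.le
  have hne_one : k ≠ 1 := by
    rintro rfl
    refine ne_zero_of_eq_zero_iff hτ hz (self_eq_neg.1 ?_)
    rw [← hp, ← hpT, Int.cast_one, one_mul]
  have htwo : (2 : ℝ) ≤ k := by exact_mod_cast (by lia : 2 ≤ k)
  exact mul_le_mul_of_nonneg_right htwo hτ.le

end Antiperiodic

lemma IsSolOn.exists_isSOP_of_reflected_segment {f x : ℝ → ℝ} {τ z₀ : ℝ}
    (hodd : ∀ y, f (-y) = -f y) (hx : IsSolOn f x) (hτ : 1 < τ)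
    (hseg : ∀ t ∈ Icc (-1) 0, x (t + τ) = -x t)
    (hz : Ico (-1) (-1 + τ) ∩ x ⁻¹' {0} = {z₀}) :
    ∃ p, IsSOP f p ∧ MinPeriod p (2 * τ) := by
  have hτ0 : 0 < τ := zero_lt_one.trans hτ
  obtain ⟨p, hp, hpx⟩ :=
    exists_antiperiodic_eqOn_Ici hτ0 (hx.antiperiodic_of_segment hodd hτ0.le hseg)
  have hperiodic : Function.Periodic p (2 * τ) := hp.periodic_two_mul
  have hdelayed : Function.Periodic (fun t => f (p (t - 1))) (2 * τ) :=
    (hperiodic.sub_const 1).comp f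
  have hd_pos : ∀ t, 0 < t → HasDerivAt p (f (p (t - 1))) t := fun t ht => by
    rw [hpx (mem_Ici.2 (by linarith))]
    exact (hx.2 t ht).congr_of_eventuallyEq
      (hpx.eventuallyEq_of_mem (Ici_mem_nhds (by linarith)))
  have hzp : Ico (-1) (-1 + τ) ∩ p ⁻¹' {0} = {z₀} :=
    (hpx.mono Ico_subset_Ici_self).inter_preimage_eq {0} ▸ hz
  have hzero := antiperiodic_eq_zero_iff hp hτ0 hzp
  have hz₀ : p z₀ = 0 := (hzero z₀).2 ⟨0, by simp⟩
  refine ⟨p, ⟨hasDerivAt_of_periodic (by linarith) hperiodic hdelayed hd_pos,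
    ⟨2 * τ, by linarith, hperiodic⟩,
    ⟨z₀ + τ / 2, z₀, hz₀.symm ▸ ne_zero_of_eq_zero_iff hτ0 hzero⟩, fun z z' h h' hne => ?_⟩,
    minPeriod_two_mul_of_antiperiodic hp hτ0 hzero⟩
  exact hτ.trans_le (le_abs_sub_of_eq_zero_iff hτ0 hzero h h' hne)

lemma integral_eq_integral_abs_of_odd {f : ℝ → ℝ} (hf : Continuous f) (hodd : ∀ y, f (-y) = -f y)
    (y b : ℝ) : ∫ u in y..b, f u = ∫ u in |y|..b, f u := by
  have hzero : ∫ u in -|y|..|y|, f u = 0 := by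
    have hneg := intervalIntegral.integral_comp_neg f (a := -|y|) (b := |y|)
    simp only [hodd, intervalIntegral.integral_neg, neg_neg] at hneg
    exact self_eq_neg.1 hneg.symm
  rcases abs_choice y with h | h
  · rw [h]
  · rw [h, neg_neg] at hzero
    rw [h, ← intervalIntegral.integral_add_adjacent_intervals (hf.intervalIntegrable y (-y))
      (hf.intervalIntegrable (-y) b), hzero, zero_add]

namespace HypH''

variable {f x : ℝ → ℝ} {a c δ γ : ℝ}

lemma abs_apply_le (h : HypH'' f a c δ γ) {y : ℝ} (hy : |y| ≤ 2 * a) : |f y| ≤ γ := by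
  rcases abs_cases y with ⟨habs, hy0⟩ | ⟨habs, hy0⟩
  · exact h.2.1 y ⟨hy0, habs ▸ hy⟩
  · rw [← abs_neg, ← h.1]
    exact h.2.1 (-y) ⟨by linarith, habs ▸ hy⟩

lemma apply_eq_of_mem_Icc_neg_two_mul (h : HypH'' f a c δ γ) {y : ℝ}
    (hy : y ∈ Icc (-γ) (-(2 * a))) : f y = δ := by
  rw [← neg_inj, ← h.1]
  exact h.2.2.2 (-y) ⟨by linarith [hy.2], by linarith [hy.1]⟩

lemma apply_eq_of_mem_Icc_neg (h : HypH'' f a c δ γ) {y : ℝ}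
    (hy : y ∈ Icc (-(2 * a) + c) (-a)) : f y = γ := by
  rw [← neg_inj, ← h.1]
  exact h.2.2.1 (-y) ⟨by linarith [hy.2], by linarith [hy.1]⟩

lemma abs_integral_le (h : HypH'' f a c δ γ) (hf : Continuous f) (ha : 0 ≤ a) (hγ : 0 ≤ γ) {y : ℝ}
    (hy : |y| ≤ 2 * a) : |∫ u in y..a, f u| ≤ γ * a := by
  rw [integral_eq_integral_abs_of_odd hf h.1]
  have hbound : ∀ u ∈ uIoc (|y|) a, ‖f u‖ ≤ γ := fun u hu => h.abs_apply_le (by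
    rcases mem_uIoc.1 hu with hu | hu <;>
      exact abs_le.2 ⟨by linarith [abs_nonneg y], by linarith⟩)
  calc |∫ u in |y|..a, f u| ≤ γ * |a - (|y|)| :=
        intervalIntegral.norm_integral_le_of_norm_le_const hbound
    _ ≤ γ * a := mul_le_mul_of_nonneg_left
        (abs_le.2 ⟨by linarith, by linarith [abs_nonneg y]⟩) hγ

lemma integral_lt (h : HypH'' f a c δ γ) (hf : Continuous f) (ha : 0 < a) (h2a : 2 * a ≤ γ)
    (hδγ : δ < γ) : ∫ u in -(2 * a)..a, f u < γ * a := by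
  calc ∫ u in -(2 * a)..a, f u = ∫ u in (2 * a)..a, f u := by
        rw [integral_eq_integral_abs_of_odd hf h.1, abs_neg, abs_of_pos (by linarith)]
    _ = ∫ u in a..(2 * a), -f u := by
        rw [intervalIntegral.integral_neg, ← intervalIntegral.integral_symm]
    _ < ∫ _ in a..(2 * a), γ := by
        refine intervalIntegral.integral_lt_integral_of_continuousOn_of_le_of_exists_lt
          (by linarith) hf.neg.continuousOn continuousOn_const (fun u hu => ?_)
          ⟨2 * a, ⟨by linarith, le_rfl⟩, ?_⟩
        · exact (neg_le_abs _).trans (h.2.1 u ⟨by linarith [hu.1], hu.2⟩)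
        · rwa [h.2.2.2 _ ⟨le_rfl, h2a⟩, neg_neg]
    _ = γ * a := by rw [intervalIntegral.integral_const, smul_eq_mul]; ring

lemma mem_Icc_of_affine_segment (h : HypH'' f a c δ γ) (hf : Continuous f) (ha : 0 < a)
    (h4a : 4 * a ≤ γ) (hx : IsSolOn f x) (hseg : ∀ t ∈ Icc (-1) 0, x t = a - γ * (t + 1)) {t : ℝ}
    (ht : t ∈ Icc 0 (3 * a / γ)) : x t ∈ Icc (-γ) (-(2 * a)) := by
  have hγ : 0 < γ := by linarith
  have ht1 : t ≤ 1 := ht.2.trans ((div_le_one hγ).2 (by linarith))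
  have htγ : t * γ ≤ 3 * a := (le_div_iff₀ hγ).1 ht.2
  have ht0 : 0 ≤ t * γ := mul_nonneg ht.1 hγ.le
  have hint := h.abs_integral_le hf ha.le hγ.le (y := a - γ * t)
    (abs_le.2 ⟨by linarith, by linarith⟩)
  have hval := hx.eq_add_integral_of_affine_segment hf hγ.ne' hseg ⟨ht.1, ht1⟩
  have hmul : |γ⁻¹ * ∫ u in (a - γ * t)..a, f u| ≤ a := by
    rwa [abs_mul, abs_of_pos (inv_pos.2 hγ), inv_mul_le_iff₀ hγ]
  obtain ⟨hlow, hupp⟩ := abs_le.1 hmul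
  constructor <;> linarith

lemma apply_three_mul_div_lt (h : HypH'' f a c δ γ) (hf : Continuous f) (ha : 0 < a)
    (h4a : 4 * a ≤ γ) (hδγ : δ < γ) (hx : IsSolOn f x)
    (hseg : ∀ t ∈ Icc (-1) 0, x t = a - γ * (t + 1)) : x (3 * a / γ) < 2 * a - γ := by
  have hγ : 0 < γ := by linarith
  have harg : a - γ * (3 * a / γ) = -(2 * a) := by field_simp; ring
  have hval := hx.eq_add_integral_of_affine_segment hf hγ.ne' hseg
    ⟨by positivity, (div_le_one hγ).2 (by linarith)⟩ (t := 3 * a / γ)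
  have hint : γ⁻¹ * ∫ u in -(2 * a)..a, f u < a :=
    (inv_mul_lt_iff₀ hγ).2 (h.integral_lt hf ha (by linarith) hδγ)
  rw [harg] at hval
  linarith

lemma exists_slow_climb (h : HypH'' f a c δ γ) (hf : Continuous f) (ha : 0 < a) (hδ : 0 < δ)
    (h4a : 4 * a ≤ γ) (hδγ : δ < γ) (hx : IsSolOn f x)
    (hseg : ∀ t ∈ Icc (-1) 0, x t = a - γ * (t + 1)) :
    ∃ t₁, 3 * a / γ + (γ - 4 * a) / δ < t₁ ∧ (∀ t ∈ Icc 0 t₁, x t < 0) ∧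
      ∀ t ∈ Icc t₁ (t₁ + 1), x t = -(2 * a) + δ * (t - t₁) := by
  have hγ : 0 < γ := by linarith
  have hs : 0 ≤ 3 * a / γ := by positivity
  have hlt := h.apply_three_mul_div_lt hf ha h4a hδγ hx hseg
  set s := 3 * a / γ with hs_def
  have hsγ : γ * s = 3 * a := by rw [hs_def]; field_simp
  have hmem : ∀ t ∈ Icc (s - 1) s, x t ∈ Icc (-γ) (-(2 * a)) := by
    rintro t ⟨hst, hts⟩
    rcases le_total t 0 with ht0 | ht0
    · rw [hseg t ⟨by linarith, ht0⟩]
      constructor <;> nlinarith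
    · exact h.mem_Icc_of_affine_segment hf ha h4a hx hseg ⟨ht0, hts⟩
  set t₁ := s + (-(2 * a) - x s) / δ with ht₁
  have hexit : δ * (t₁ - s) = -(2 * a) - x s := by rw [ht₁]; field_simp; ring
  have hclimb := hx.eq_add_mul_of_forall_mem_Icc hs hδ
    (fun y hy => h.apply_eq_of_mem_Icc_neg_two_mul hy) hmem hexit
  have hlate : s + (γ - 4 * a) / δ < t₁ := by
    rw [ht₁, add_lt_add_iff_left]
    exact div_lt_div_of_pos_right (by linarith) hδ
  have hst₁ : s ≤ t₁ := by nlinarith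
  refine ⟨t₁, hlate, fun t ht => ?_, fun t ht => hclimb t ⟨hst₁.trans ht.1, ht.2⟩⟩
  rcases le_total t s with hts | hst
  · linarith [(h.mem_Icc_of_affine_segment hf ha h4a hx hseg ⟨ht.1, hts⟩).2]
  · rw [hclimb t ⟨hst, by linarith [ht.2]⟩]
    nlinarith [ht.2]

/-- The delayed argument needs time `c / δ` to cross `[-2a, -2a + c]`, where `f` is only known to
lie in `[0, γ]`; meanwhile the solution rises by at most `γ * (c / δ)`. -/
lemma mem_Icc_of_slow_climb (h : HypH'' f a c δ γ) (hc : 0 < c) (hcδ : c < δ) (hγ : 0 ≤ γ)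
    (hiii : δ + c / δ * γ ≤ a) (hneg : ∀ y ∈ Icc (2 * a - c) (2 * a), f y ≤ 0)
    (hx : IsSolOn f x) {t₁ : ℝ} (ht₁ : 0 ≤ t₁)
    (hclimb : ∀ t ∈ Icc t₁ (t₁ + 1), x t = -(2 * a) + δ * (t - t₁)) :
    ∀ t ∈ Icc (t₁ + c / δ) (t₁ + c / δ + 1), x t ∈ Icc (-(2 * a) + c) (-a) := by
  have hδ : 0 < δ := hc.trans hcδ
  have hcross : c / δ < 1 := (div_lt_one hδ).2 hcδ
  have hmargin : 0 ≤ c / δ * γ := by positivity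
  rintro t ⟨hst, hts⟩
  rcases le_total t (t₁ + 1) with htt₁ | ht₁t
  · have hlow : c ≤ δ * (t - t₁) := (div_le_iff₀' hδ).1 (by linarith)
    have hupp : δ * (t - t₁) ≤ δ := mul_le_of_le_one_right hδ.le (by linarith)
    rw [hclimb t ⟨by linarith [div_pos hc hδ], htt₁⟩]
    constructor <;> linarith
  · have hslope : ∀ u ∈ Ioo (t₁ + 1 - 1) (t - 1), f (x u) ∈ Icc 0 γ := by
      rintro u ⟨ht₁u, hut⟩
      have hrise : δ * (u - t₁) ≤ c := (le_div_iff₀' hδ).1 (by linarith)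
      have hrise0 : 0 ≤ δ * (u - t₁) := mul_nonneg hδ.le (by linarith)
      have hxu := hclimb u ⟨by linarith, by linarith⟩
      have hfneg : f (-x u) ≤ 0 := hneg _ ⟨by linarith, by linarith⟩
      rw [h.1, neg_nonpos] at hfneg
      exact ⟨hfneg, (le_abs_self _).trans
        (h.abs_apply_le (abs_le.2 ⟨by linarith, by linarith⟩))⟩
    have hx₁ : x (t₁ + 1) = -(2 * a) + δ := by
      simpa using hclimb (t₁ + 1) ⟨by linarith, le_rfl⟩
    obtain ⟨hlow, hupp⟩ := hx.sub_mem_Icc (by linarith) ht₁t hslope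
    have hlen : γ * (t - (t₁ + 1)) ≤ c / δ * γ := by
      rw [mul_comm]
      exact mul_le_mul_of_nonneg_right (by linarith) hγ
    constructor <;> linarith

lemma exists_fast_climb (h : HypH'' f a c δ γ) (ha : 0 < a) (hγ : 0 < γ) (hx : IsSolOn f x) {s : ℝ}
    (hs : 0 ≤ s) (hmem : ∀ t ∈ Icc s (s + 1), x t ∈ Icc (-(2 * a) + c) (-a)) :
    ∃ t₂, s + 1 ≤ t₂ ∧ (∀ t ∈ Icc s t₂, x t < 0) ∧
      ∀ t ∈ Icc t₂ (t₂ + 1), x t = -a + γ * (t - t₂) := by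
  have hend := (hmem (s + 1) ⟨by linarith, le_rfl⟩).2
  have hclimb := hx.eq_add_mul_of_forall_mem_Icc (s := s + 1) (by linarith) hγ
    (fun y hy => h.apply_eq_of_mem_Icc_neg hy) (by simpa using hmem)
    (τ := s + 1 + (-a - x (s + 1)) / γ) (by field_simp; ring)
  set t₂ := s + 1 + (-a - x (s + 1)) / γ
  have hst₂ : s + 1 ≤ t₂ := le_add_of_nonneg_right (div_nonneg (by linarith) hγ.le)
  refine ⟨t₂, hst₂, fun t ht => ?_, fun t ht => hclimb t ⟨hst₂.trans ht.1, ht.2⟩⟩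
  rcases le_total t (s + 1) with hts | hst
  · linarith [(hmem t ⟨ht.1, hts⟩).2]
  · rw [hclimb t ⟨hst, by linarith [ht.2]⟩]
    nlinarith [ht.2]

lemma exists_reflected_segment (h : HypH'' f a c δ γ) (hf : Continuous f) (ha : 0 < a) (hc : 0 < c)
    (hδ : 0 < δ) (h4a : 4 * a ≤ γ) (hiii : δ + c / δ * γ ≤ a)
    (hneg : ∀ y ∈ Icc (2 * a - c) (2 * a), f y ≤ 0) (hx : IsSolOn f x)
    (hseg : ∀ t ∈ Icc (-1) 0, x t = a - γ * (t + 1)) :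
    ∃ t₂ > 0, 1 + c / δ + 3 * a / γ + (γ - 4 * a) / δ < t₂ ∧ (∀ t ∈ Icc 0 t₂, x t < 0) ∧
      ∀ t ∈ Icc t₂ (t₂ + 1), x t = -a + γ * (t - t₂) := by
  have hγ : 0 < γ := by linarith
  have hmargin : 0 < c / δ * γ := by positivity
  have hcδ : c < δ := (div_lt_one hδ).1 (lt_of_mul_lt_mul_right (by linarith) hγ.le)
  obtain ⟨t₁, hlate, hneg₁, hslow⟩ := h.exists_slow_climb hf ha hδ h4a (by linarith) hx hseg
  have ht₁ : 0 ≤ t₁ := le_trans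
    (add_nonneg (by positivity) (div_nonneg (by linarith) hδ.le)) hlate.le
  have hcross : 0 < c / δ := div_pos hc hδ
  obtain ⟨t₂, hst₂, hneg₂, hfast⟩ := h.exists_fast_climb ha hγ hx (add_nonneg ht₁ hcross.le)
    (h.mem_Icc_of_slow_climb hc hcδ hγ.le hiii hneg hx ht₁ hslow)
  refine ⟨t₂, by linarith, by linarith, fun t ht => ?_, hfast⟩
  rcases le_total t t₁ with htt₁ | ht₁t
  · exact hneg₁ t ⟨ht.1, htt₁⟩
  rcases le_total t (t₁ + c / δ) with hts | hst
  · have hrise : δ * (t - t₁) ≤ c := (le_div_iff₀' hδ).1 (by linarith)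
    rw [hslow t ⟨ht₁t, by linarith [(div_lt_one hδ).2 hcδ]⟩]
    linarith
  · exact hneg₂ t ⟨hst, ht.2⟩

end HypH''

lemma Ico_inter_preimage_zero_of_affine_of_neg {x : ℝ → ℝ} {a γ t₂ : ℝ} (ha : 0 < a)
    (haγ : a < γ) (ht₂ : 0 ≤ t₂) (hseg : ∀ t ∈ Icc (-1) 0, x t = a - γ * (t + 1))
    (hneg : ∀ t ∈ Icc 0 t₂, x t < 0) : Ico (-1) t₂ ∩ x ⁻¹' {0} = {a / γ - 1} := by
  have hγ : 0 < γ := ha.trans haγ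
  have hroot : a / γ - 1 ∈ Icc (-1 : ℝ) 0 :=
    ⟨by linarith [div_pos ha hγ], by linarith [(div_lt_one hγ).2 haγ]⟩
  ext t
  simp only [mem_inter_iff, mem_preimage, mem_singleton_iff]
  constructor
  · rintro ⟨⟨ht, htt₂⟩, hzero⟩
    rcases le_total t 0 with h0 | h0
    · rw [hseg t ⟨ht, h0⟩] at hzero
      field_simp
      linarith
    · exact absurd hzero (hneg t ⟨h0, htt₂.le⟩).ne
  · rintro rfl
    have hval : x (a / γ - 1) = 0 := by rw [hseg _ hroot]; field_simp; ring
    refine ⟨⟨hroot.1, (hroot.2.trans ht₂).lt_of_ne ?_⟩, hval⟩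
    rintro rfl
    exact (hneg _ ⟨ht₂, le_rfl⟩).ne hval

lemma HypH.apply_neg_of_pos {f : ℝ → ℝ} (h : HypH f) {y : ℝ} (hy : 0 < y) : f y < 0 :=
  neg_of_mul_neg_right (h.2.1 y hy.ne') hy.le

theorem statement_11_general (f : ℝ → ℝ) (a c δ γ : ℝ) (ha : 0 < a) (hc : 0 < c) (hδ : 0 < δ)
    (hγ : 4 * a ≤ γ) (hiii : δ + (c / δ) * γ ≤ a) (hf : Continuous f)
    (hneg : ∀ y ∈ Icc (2 * a - c) (2 * a), f y ≤ 0) (hH'' : HypH'' f a c δ γ) :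
    ∃ (p : ℝ → ℝ) (T : ℝ), IsSOP f p ∧ MinPeriod p T ∧
      4 + 2 * c / δ + 6 * a / γ + 2 * (γ - 4 * a) / δ < T := by
  obtain ⟨x, hx, hxφ⟩ := IsSolOn.exists_eqOn_Iic hf
    (by fun_prop : Continuous fun t : ℝ => a - γ * (t + 1))
  have hseg : ∀ t ∈ Icc (-1) 0, x t = a - γ * (t + 1) := fun t ht => hxφ ht.2
  obtain ⟨t₂, ht₂, hlate, hneg_x, hfast⟩ :=
    hH''.exists_reflected_segment hf ha hc hδ hγ hiii hneg hx hseg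
  have hreflect : ∀ t ∈ Icc (-1) 0, x (t + (t₂ + 1)) = -x t := fun t ht => by
    rw [hfast _ ⟨by linarith [ht.1], by linarith [ht.2]⟩, hseg t ht]
    ring
  obtain ⟨p, hp, hmin⟩ := hx.exists_isSOP_of_reflected_segment hH''.1 (by linarith) hreflect (by
    rw [neg_add_cancel_comm_assoc]
    exact Ico_inter_preimage_zero_of_affine_of_neg ha (by linarith) ht₂.le hseg hneg_x)
  refine ⟨p, 2 * (t₂ + 1), hp, hmin, ?_⟩
  calc 4 + 2 * c / δ + 6 * a / γ + 2 * (γ - 4 * a) / δ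
      = 2 * (1 + c / δ + 3 * a / γ + (γ - 4 * a) / δ + 1) := by ring
    _ < 2 * (t₂ + 1) := by linarith

theorem statement_11 (f : ℝ → ℝ) (a c δ γ : ℝ)
    (ha : 0 < a) (hc : 0 < c) (hδ : 0 < δ) (hγ : 0 < γ)
    (hi : c < min a δ) (hii : 4 * a ≤ γ ∧ δ < γ) (hiii : δ + (c / δ) * γ ≤ a)
    (hH : HypH f) (hH'' : HypH'' f a c δ γ) :
    ∃ (p : ℝ → ℝ) (T : ℝ), IsSOP f p ∧ MinPeriod p T ∧
      4 + 2 * c / δ + 6 * a / γ + 2 * (γ - 4 * a) / δ < T := by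
  exact statement_11_general f a c δ γ ha hc hδ hii.1 hiii hH.1 (fun y hy =>
    (hH.apply_neg_of_pos (by linarith [hy.1, (lt_min_iff.1 hi).1])).le) hH''
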